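/- Let 0 ≤ d < 4/5. Then the iterated integral ∫₀¹ ∫₀^{y₂} (1-y₃)^{-d} ∫₀^{y₃} (y₂-y₄)^{-d}(1-y₄)^{-d} ∫₀^{y₄} (y₂-y₅)^{-d}(y₃-y₅)^{-d} dy₅ dy₄ dy₃ dy₂ equals [Γ(1-d)Γ(2-d)Γ(4-5d)/((1-d)² Γ(3-2d) Γ(5-5d))]·₃F₂(1,d,2-2d;2-d,3-2d;1) − [Γ(1-d)Γ(3-3d)Γ(4-5d)/((1-d)² Γ(4-4d) Γ(5-5d))]·₄F₃(1,d,2-2d,3-3d;2-d,3-2d,4-4d;1). -/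

import Mathlib

open Real MeasureTheory

/-- Pochhammer symbol `(a)_k = a (a+1) ⋯ (a+k-1)` for real `a`. -/
noncomputable def poch (a : ℝ) (k : ℕ) : ℝ := (ascPochhammer ℝ k).eval a

/-- Gaussian hypergeometric function `₂F₁(a,b;c;z)`. -/
noncomputable def hyp2F1 (a b c z : ℝ) : ℝ :=
  ∑' k : ℕ, (poch a k * poch b k) / poch c k * z ^ k / (Nat.factorial k)

/-- Generalized hypergeometric function `₃F₂(a₁,a₂,a₃;b₁,b₂;z)`. -/
noncomputable def hyp3F2 (a₁ a₂ a₃ b₁ b₂ z : ℝ) : ℝ :=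
  ∑' k : ℕ, (poch a₁ k * poch a₂ k * poch a₃ k) / (poch b₁ k * poch b₂ k) * z ^ k /
    (Nat.factorial k)

/-- Generalized hypergeometric function `₄F₃(a₁,a₂,a₃,a₄;b₁,b₂,b₃;z)`. -/
noncomputable def hyp4F3 (a₁ a₂ a₃ a₄ b₁ b₂ b₃ z : ℝ) : ℝ :=
  ∑' k : ℕ, (poch a₁ k * poch a₂ k * poch a₃ k * poch a₄ k) /
    (poch b₁ k * poch b₂ k * poch b₃ k) * z ^ k / (Nat.factorial k)

/-!
All singularities of the integrand are homogeneous about the endpoint `1`. Integrating over the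
innermost variable `y₅` last and rescaling the other three by `1 - y₅` therefore splits off the
factor `B(1, 4 - 5d)`, and leaves the integral of `w(b) m(a, c)` over `0 < c < b < a < 1` with
`w(b) = b^(-d) (1 - b)^(-d)` and `m(a, c) = a^(-d) (1 - c)^(-d) (a - c)^(-d)`.

For fixed `b` the domain of `(a, c)` is a rectangle: the triangle `0 < c < a < 1` without the
triangles `0 < c < a < b` and `b < c < a < 1`, the second of which the reflection
`(a, c) ↦ (1 - c, 1 - a)` turns into `0 < c < a < 1 - b`. Since `m` is invariant under it, and `w`
under `b ↦ 1 - b`, the integral is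
`(∫ w) T(1) - 2 ∫ w(b) T(b) db`, where `T(b)` is the integral of `m` over `0 < c < a < b`.

Expanding `(1 - c)^(-d)` in the binomial series, `T(b)` is obtained by two Euler integrals and
`∫ w(b) T(b) db` by a third; each multiplies the `k`-th coefficient by a quotient of Pochhammer
symbols. This yields the `₃F₂` and the `₄F₃` respectively. Carrying out everything in `ℝ≥0∞` makes
all interchanges unconditional; only `T(1) < ∞` is needed to subtract.
-/

open Set
open scoped ENNReal
open ProbabilityTheory (beta beta_pos)

section IooIntegrals

lemma lintegral_Ioo_affine {k : ℝ} (hk : 0 < k) (y t : ℝ) (f : ℝ → ℝ≥0∞) :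
    ∫⁻ x in Ioo y (k * t + y), f x = ENNReal.ofReal k * ∫⁻ x in Ioo 0 t, f (k * x + y) := by
  have himage : (fun x => k * x + y) '' Ioo 0 t = Ioo y (k * t + y) := by
    rw [image_affine_Ioo hk, mul_zero, zero_add]
  rw [← himage, lintegral_image_eq_lintegral_abs_deriv_mul (f' := fun _ => k) measurableSet_Ioo
    (fun x _ => ((hasDerivAt_const_mul k).add_const y).hasDerivWithinAt)
    (fun x _ x' _ h => mul_left_cancel₀ hk.ne' (add_right_cancel h)), abs_of_pos hk,
    lintegral_const_mul' _ _ ENNReal.ofReal_ne_top]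

lemma lintegral_Ioo_const_sub (r a b : ℝ) (f : ℝ → ℝ≥0∞) :
    ∫⁻ x in Ioo a b, f x = ∫⁻ x in Ioo (r - b) (r - a), f (r - x) := by
  rw [← lintegral_indicator measurableSet_Ioo, ← lintegral_indicator measurableSet_Ioo,
    ← lintegral_sub_left_eq_self _ r, ← preimage_const_sub_Ioo]
  rfl

lemma lintegral_Ioo_add_adjacent {a b c : ℝ} (hab : a ≤ b) (hbc : b < c) (f : ℝ → ℝ≥0∞) :
    (∫⁻ x in Ioo a b, f x) + ∫⁻ x in Ioo b c, f x = ∫⁻ x in Ioo a c, f x := by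
  have hdisj : Disjoint (Ioc a b) (Ioo b c) :=
    disjoint_left.2 fun x hx hx' => hx.2.not_gt hx'.1
  rw [← Ioc_union_Ioo_eq_Ioo hab hbc, lintegral_union measurableSet_Ioo hdisj,
    setLIntegral_congr Ioo_ae_eq_Ioc]

@[fun_prop]
lemma measurable_lintegral_Ioo {α : Type*} [MeasurableSpace α] {u v : α → ℝ} {f : α → ℝ → ℝ≥0∞}
    (hu : Measurable u) (hv : Measurable v) (hf : Measurable (Function.uncurry f)) :
    Measurable fun x => ∫⁻ y in Ioo (u x) (v x), f x y := by
  have hset : MeasurableSet {p : α × ℝ | p.2 ∈ Ioo (u p.1) (v p.1)} :=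
    (measurableSet_lt (hu.comp measurable_fst) measurable_snd).inter
      (measurableSet_lt measurable_snd (hv.comp measurable_fst))
  simp_rw [← lintegral_indicator measurableSet_Ioo]
  exact (hf.indicator hset).lintegral_prod_right'

lemma lintegral_Ioo_Ioo_swap {f : ℝ → ℝ → ℝ≥0∞} (hf : Measurable (Function.uncurry f)) (a b : ℝ) :
    ∫⁻ x in Ioo a b, ∫⁻ y in Ioo a x, f x y = ∫⁻ y in Ioo a b, ∫⁻ x in Ioo y b, f x y := by
  have hset : MeasurableSet {p : ℝ × ℝ | p.2 < p.1} := measurableSet_lt (by fun_prop) (by fun_prop)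
  have hlower : ∀ x ∈ Ioo a b, ∫⁻ y in Ioo a x, f x y =
      ∫⁻ y in Ioo a b, {p : ℝ × ℝ | p.2 < p.1}.indicator (Function.uncurry f) (x, y) := by
    intro x hx
    have hinter : Ioo a x = Iio x ∩ Ioo a b := by
      rw [inter_comm, Ioo_inter_Iio, min_eq_right hx.2.le]
    rw [hinter, ← setLIntegral_indicator measurableSet_Iio]
    rfl
  have hupper : ∀ y ∈ Ioo a b, ∫⁻ x in Ioo y b, f x y =
      ∫⁻ x in Ioo a b, {p : ℝ × ℝ | p.2 < p.1}.indicator (Function.uncurry f) (x, y) := by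
    intro y hy
    have hinter : Ioo y b = Ioi y ∩ Ioo a b := by
      rw [Ioi_inter_Ioo, sup_eq_left.2 hy.1.le]
    rw [hinter, ← setLIntegral_indicator measurableSet_Ioi]
    rfl
  rw [setLIntegral_congr_fun measurableSet_Ioo hlower,
    setLIntegral_congr_fun measurableSet_Ioo hupper]
  exact lintegral_lintegral_swap (hf.indicator hset).aemeasurable

lemma intervalIntegral_eq_toReal_lintegral_Ioo {a b : ℝ} (hab : a ≤ b) {F : ℝ → ℝ} {G : ℝ → ℝ≥0∞}
    (hG : Measurable G) (hfin : ∫⁻ x in Ioo a b, G x ≠ ∞)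
    (hFG : ∀ x ∈ Ioo a b, G x ≠ ∞ → F x = (G x).toReal) :
    ∫ x in a..b, F x = (∫⁻ x in Ioo a b, G x).toReal := by
  have hlt : ∀ᵐ x ∂volume.restrict (Ioo a b), G x < ∞ := ae_lt_top hG hfin
  rw [intervalIntegral.integral_of_le hab, integral_Ioc_eq_integral_Ioo,
    ← integral_toReal hG.aemeasurable hlt]
  refine integral_congr_ae ?_
  filter_upwards [hlt, ae_restrict_mem measurableSet_Ioo] with x hx hmem
  exact hFG x hmem hx.ne

lemma lintegral_simplex_affine {k : ℝ} (hk : 0 < k) (y : ℝ) (f : ℝ → ℝ → ℝ → ℝ≥0∞) :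
    ∫⁻ x₁ in Ioo y (k + y), ∫⁻ x₂ in Ioo y x₁, ∫⁻ x₃ in Ioo y x₂, f x₁ x₂ x₃ =
      ENNReal.ofReal (k ^ 3) * ∫⁻ a in Ioo 0 1, ∫⁻ b in Ioo 0 a, ∫⁻ c in Ioo 0 b,
        f (k * a + y) (k * b + y) (k * c + y) := by
  nth_rw 1 [← mul_one k]
  simp_rw [lintegral_Ioo_affine hk, lintegral_const_mul' _ _ ENNReal.ofReal_ne_top]
  rw [ENNReal.ofReal_pow hk.le]
  ring

variable {f : ℝ × ℝ × ℝ × ℝ → ℝ≥0∞}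

lemma lintegral_simplex_innermost_to_outermost (hf : Measurable f) (a b : ℝ) :
    ∫⁻ y₂ in Ioo a b, ∫⁻ y₃ in Ioo a y₂, ∫⁻ y₄ in Ioo a y₃, ∫⁻ y₅ in Ioo a y₄, f (y₂, y₃, y₄, y₅) =
      ∫⁻ y₅ in Ioo a b, ∫⁻ y₂ in Ioo y₅ b, ∫⁻ y₃ in Ioo y₅ y₂, ∫⁻ y₄ in Ioo y₅ y₃,
        f (y₂, y₃, y₄, y₅) := by
  have swap₄ (y₂ y₃ : ℝ) : ∫⁻ y₄ in Ioo a y₃, ∫⁻ y₅ in Ioo a y₄, f (y₂, y₃, y₄, y₅) =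
      ∫⁻ y₅ in Ioo a y₃, ∫⁻ y₄ in Ioo y₅ y₃, f (y₂, y₃, y₄, y₅) :=
    lintegral_Ioo_Ioo_swap (by fun_prop) a y₃
  have swap₃ (y₂ : ℝ) : ∫⁻ y₃ in Ioo a y₂, ∫⁻ y₅ in Ioo a y₃, ∫⁻ y₄ in Ioo y₅ y₃,
        f (y₂, y₃, y₄, y₅) =
      ∫⁻ y₅ in Ioo a y₂, ∫⁻ y₃ in Ioo y₅ y₂, ∫⁻ y₄ in Ioo y₅ y₃, f (y₂, y₃, y₄, y₅) :=
    lintegral_Ioo_Ioo_swap (by fun_prop) a y₂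
  simp_rw [swap₄, swap₃]
  exact lintegral_Ioo_Ioo_swap (by fun_prop) a b

lemma intervalIntegral_simplex_eq_toReal_lintegral (hf : Measurable f) {a b : ℝ} (hab : a ≤ b)
    (hfin : ∫⁻ y₂ in Ioo a b, ∫⁻ y₃ in Ioo a y₂, ∫⁻ y₄ in Ioo a y₃, ∫⁻ y₅ in Ioo a y₄,
      f (y₂, y₃, y₄, y₅) ≠ ∞) {g : ℝ → ℝ → ℝ → ℝ → ℝ}
    (hgf : ∀ ⦃y₂ y₃ y₄ y₅⦄, y₂ ∈ Ioo a b → y₃ ∈ Ioo a y₂ → y₄ ∈ Ioo a y₃ → y₅ ∈ Ioo a y₄ →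
      g y₂ y₃ y₄ y₅ = (f (y₂, y₃, y₄, y₅)).toReal) :
    ∫ y₂ in a..b, ∫ y₃ in a..y₂, ∫ y₄ in a..y₃, ∫ y₅ in a..y₄,
      g y₂ y₃ y₄ y₅ =
    (∫⁻ y₂ in Ioo a b, ∫⁻ y₃ in Ioo a y₂, ∫⁻ y₄ in Ioo a y₃, ∫⁻ y₅ in Ioo a y₄,
      f (y₂, y₃, y₄, y₅)).toReal := by
  refine intervalIntegral_eq_toReal_lintegral_Ioo hab (by fun_prop) hfin
    fun y₂ h₂ hfin₂ => ?_
  refine intervalIntegral_eq_toReal_lintegral_Ioo h₂.1.le (by fun_prop) hfin₂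
    fun y₃ h₃ hfin₃ => ?_
  refine intervalIntegral_eq_toReal_lintegral_Ioo h₃.1.le (by fun_prop) hfin₃
    fun y₄ h₄ hfin₄ => ?_
  exact intervalIntegral_eq_toReal_lintegral_Ioo h₄.1.le (by fun_prop) hfin₄
    fun y₅ h₅ _ => hgf h₂ h₃ h₄ h₅

end IooIntegrals

section ReflectionSymmetry

/-- Integral of `m` over the triangle `0 < c < a < b`. -/
noncomputable def triangleLIntegral (m : ℝ → ℝ → ℝ≥0∞) (b : ℝ) : ℝ≥0∞ :=
  ∫⁻ a in Ioo 0 b, ∫⁻ c in Ioo 0 a, m a c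

/-- Integral of `m` over the rectangle `0 < c < b < a < 1`, which together with two triangles
makes up the triangle `0 < c < a < 1`. -/
noncomputable def rectangleLIntegral (m : ℝ → ℝ → ℝ≥0∞) (b : ℝ) : ℝ≥0∞ :=
  ∫⁻ a in Ioo b 1, ∫⁻ c in Ioo 0 b, m a c

variable {m : ℝ → ℝ → ℝ≥0∞} {w : ℝ → ℝ≥0∞}

lemma measurable_triangleLIntegral (hm : Measurable (Function.uncurry m)) :
    Measurable (triangleLIntegral m) := by
  unfold triangleLIntegral
  fun_prop

lemma measurable_rectangleLIntegral (hm : Measurable (Function.uncurry m)) :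
    Measurable (rectangleLIntegral m) := by
  unfold rectangleLIntegral
  fun_prop

lemma lintegral_mul_rectangleLIntegral (hw : Measurable w) (hm : Measurable (Function.uncurry m)) :
    ∫⁻ b in Ioo 0 1, w b * rectangleLIntegral m b =
      ∫⁻ a in Ioo 0 1, ∫⁻ b in Ioo 0 a, ∫⁻ c in Ioo 0 b, w b * m a c := by
  have hb (b : ℝ) : w b * rectangleLIntegral m b =
      ∫⁻ a in Ioo b 1, ∫⁻ c in Ioo 0 b, w b * m a c := by
    rw [rectangleLIntegral, ← lintegral_const_mul _ (by fun_prop)]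
    exact lintegral_congr fun a => (lintegral_const_mul _ (by fun_prop)).symm
  simp_rw [hb]
  exact (lintegral_Ioo_Ioo_swap (by fun_prop) 0 1).symm

lemma triangleLIntegral_one_sub (hm : Measurable (Function.uncurry m))
    (hsymm : ∀ a c, m (1 - c) (1 - a) = m a c) (b : ℝ) :
    triangleLIntegral m (1 - b) = ∫⁻ a in Ioo b 1, ∫⁻ c in Ioo b a, m a c := by
  rw [lintegral_Ioo_Ioo_swap hm, lintegral_Ioo_const_sub 1 b 1, sub_self, triangleLIntegral]
  refine lintegral_congr fun x => ?_
  rw [lintegral_Ioo_const_sub 1 (1 - x) 1, sub_self, sub_sub_cancel]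
  simp_rw [hsymm]

lemma rectangleLIntegral_add_triangleLIntegral (hm : Measurable (Function.uncurry m))
    (hsymm : ∀ a c, m (1 - c) (1 - a) = m a c) {b : ℝ} (hb : b ∈ Ioo 0 1) :
    rectangleLIntegral m b + (triangleLIntegral m b + triangleLIntegral m (1 - b)) =
      triangleLIntegral m 1 := by
  have hupper : ∫⁻ a in Ioo b 1, ∫⁻ c in Ioo 0 a, m a c =
      rectangleLIntegral m b + triangleLIntegral m (1 - b) := by
    rw [triangleLIntegral_one_sub hm hsymm, rectangleLIntegral, ← lintegral_add_left (by fun_prop)]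
    exact setLIntegral_congr_fun measurableSet_Ioo fun a ha =>
      (lintegral_Ioo_add_adjacent hb.1.le ha.1 (m a)).symm
  calc rectangleLIntegral m b + (triangleLIntegral m b + triangleLIntegral m (1 - b))
      = triangleLIntegral m b + (rectangleLIntegral m b + triangleLIntegral m (1 - b)) :=
        add_left_comm _ _ _
    _ = triangleLIntegral m 1 := by
        rw [← hupper]
        exact lintegral_Ioo_add_adjacent hb.1.le hb.2 _

lemma lintegral_mul_triangleLIntegral_one_sub (hsymm : ∀ b, w (1 - b) = w b) :
    ∫⁻ b in Ioo 0 1, w b * triangleLIntegral m (1 - b) =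
      ∫⁻ b in Ioo 0 1, w b * triangleLIntegral m b := by
  rw [lintegral_Ioo_const_sub 1, sub_self, sub_zero]
  simp_rw [hsymm, sub_sub_cancel]

lemma lintegral_mul_rectangleLIntegral_add (hw : Measurable w)
    (hm : Measurable (Function.uncurry m)) (hw_symm : ∀ b, w (1 - b) = w b)
    (hm_symm : ∀ a c, m (1 - c) (1 - a) = m a c) :
    (∫⁻ b in Ioo 0 1, w b * rectangleLIntegral m b) +
        2 * ∫⁻ b in Ioo 0 1, w b * triangleLIntegral m b =
      (∫⁻ b in Ioo 0 1, w b) * triangleLIntegral m 1 := by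
  have hrect := measurable_rectangleLIntegral hm
  have htri := measurable_triangleLIntegral hm
  nth_rw 1 [two_mul, ← lintegral_mul_triangleLIntegral_one_sub hw_symm]
  rw [add_comm (∫⁻ b in Ioo 0 1, w b * triangleLIntegral m (1 - b)),
    ← lintegral_add_left (by fun_prop), ← lintegral_add_left (by fun_prop),
    ← lintegral_mul_const _ hw]
  refine setLIntegral_congr_fun measurableSet_Ioo fun b hb => ?_
  simp only [← mul_add, rectangleLIntegral_add_triangleLIntegral hm hm_symm hb]

end ReflectionSymmetry

section EulerIntegrals

lemma poch_pos {a : ℝ} (ha : 0 < a) (k : ℕ) : 0 < poch a k :=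
  ascPochhammer_pos k a ha

lemma poch_nonneg {a : ℝ} (ha : 0 ≤ a) (k : ℕ) : 0 ≤ poch a k := by
  induction k with
  | zero => simp [poch]
  | succ n ih =>
    rw [poch, ascPochhammer_succ_eval]
    exact mul_nonneg ih (add_nonneg ha n.cast_nonneg)

lemma Gamma_add_natCast {a : ℝ} (ha : 0 < a) (k : ℕ) :
    Real.Gamma (a + k) = poch a k * Real.Gamma a := by
  induction k with
  | zero => simp [poch]
  | succ n ih =>
    rw [Nat.cast_succ, ← add_assoc, Real.Gamma_add_one (by positivity), ih, poch, poch,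
      ascPochhammer_succ_eval]
    ring

lemma beta_add_natCast {α β : ℝ} (hα : 0 < α) (hβ : 0 < β) (k : ℕ) :
    beta (α + k) β = beta α β * (poch α k / poch (α + β) k) := by
  have hpoch := (poch_pos (add_pos hα hβ) k).ne'
  have hGamma := (Real.Gamma_pos_of_pos (add_pos hα hβ)).ne'
  rw [beta, beta, add_right_comm, Gamma_add_natCast hα, Gamma_add_natCast (add_pos hα hβ)]
  field_simp

lemma beta_one_left {x : ℝ} (hx : 0 < x) : beta 1 x = 1 / x := by
  have hGamma := (Real.Gamma_pos_of_pos hx).ne'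
  rw [beta, Real.Gamma_one, add_comm, Real.Gamma_add_one hx.ne']
  field_simp

lemma beta_one_right {x : ℝ} (hx : 0 < x) : beta x 1 = 1 / x := by
  rw [← beta_one_left hx, beta, beta, mul_comm, add_comm]

lemma beta_self {x : ℝ} (hx : 0 < x) :
    beta x x = 2 * (Real.Gamma x * Real.Gamma (x + 1) / Real.Gamma (2 * x + 1)) := by
  have hGamma := (Real.Gamma_pos_of_pos (mul_pos two_pos hx)).ne'
  rw [beta, Real.Gamma_add_one hx.ne', Real.Gamma_add_one (mul_pos two_pos hx).ne', ← two_mul]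
  field_simp

lemma hasSum_one_sub_rpow_neg (d : ℝ) {x : ℝ} (hx0 : 0 ≤ x) (hx1 : x < 1) :
    HasSum (fun k : ℕ => poch d k / k.factorial * x ^ k) ((1 - x) ^ (-d)) := by
  have hmem : x ∈ Metric.eball (0 : ℝ) 1 := by
    simp [Metric.mem_eball, edist_dist, abs_of_nonneg hx0, hx1]
  have hcoeff (k : ℕ) : Ring.choose (d + k - 1) k = poch d k / k.factorial := by
    rw [← Ring.multichoose_eq, eq_div_iff (by positivity), mul_comm, ← nsmul_eq_mul,
      Ring.factorial_nsmul_multichoose_eq_ascPochhammer, Polynomial.ascPochhammer_smeval_eq_eval,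
      poch]
  have hsum := (Real.one_div_one_sub_rpow_hasFPowerSeriesOnBall_zero d).hasSum hmem
  simpa only [zero_add, FormalMultilinearSeries.ofScalars_apply_eq, hcoeff, smul_eq_mul,
    Real.rpow_neg (sub_nonneg.2 hx1.le), one_div] using hsum

lemma ofReal_one_sub_rpow_neg {d x : ℝ} (hd : 0 ≤ d) (hx0 : 0 ≤ x) (hx1 : x < 1) :
    ENNReal.ofReal ((1 - x) ^ (-d)) =
      ∑' k : ℕ, ENNReal.ofReal (poch d k / k.factorial) * ENNReal.ofReal x ^ k := by
  have hcoeff (k : ℕ) : 0 ≤ poch d k / k.factorial :=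
    div_nonneg (poch_nonneg hd k) k.factorial.cast_nonneg
  have hsum := hasSum_one_sub_rpow_neg d hx0 hx1
  rw [← hsum.tsum_eq, ENNReal.ofReal_tsum_of_nonneg
    (fun k => mul_nonneg (hcoeff k) (pow_nonneg hx0 k)) hsum.summable]
  exact tsum_congr fun k => by rw [ENNReal.ofReal_mul (hcoeff k), ENNReal.ofReal_pow hx0]

lemma toReal_tsum_ofReal {f : ℕ → ℝ} (hf : ∀ k, 0 ≤ f k) :
    (∑' k, ENNReal.ofReal (f k)).toReal = ∑' k, f k := by
  simp_rw [ENNReal.tsum_toReal_eq fun _ => ENNReal.ofReal_ne_top, ENNReal.toReal_ofReal (hf _)]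

lemma lintegral_rpow_mul_one_sub_rpow {α β : ℝ} (hα : 0 < α) (hβ : 0 < β) :
    ∫⁻ x in Ioo 0 1, ENNReal.ofReal (x ^ (α - 1) * (1 - x) ^ (β - 1)) =
      ENNReal.ofReal (beta α β) := by
  have hbeta := beta_pos hα hβ
  have hpdf := ProbabilityTheory.lintegral_betaPDF_eq_one hα hβ
  simp_rw [ProbabilityTheory.lintegral_betaPDF, mul_assoc,
    ENNReal.ofReal_mul (one_div_pos.2 hbeta).le] at hpdf
  rw [lintegral_const_mul' _ _ ENNReal.ofReal_ne_top, one_div, ENNReal.ofReal_inv_of_pos hbeta,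
    mul_comm] at hpdf
  rw [ENNReal.eq_inv_of_mul_eq_one_left hpdf, inv_inv]

lemma lintegral_rpow_mul_sub_rpow {α β b : ℝ} (hα : 0 < α) (hβ : 0 < β) (hb : 0 < b) :
    ∫⁻ x in Ioo 0 b, ENNReal.ofReal (x ^ (α - 1) * (b - x) ^ (β - 1)) =
      ENNReal.ofReal (b ^ (α + β - 1) * beta α β) := by
  have hscale : ∀ x ∈ Ioo (0 : ℝ) 1,
      ENNReal.ofReal ((b * x + 0) ^ (α - 1) * (b - (b * x + 0)) ^ (β - 1)) =
        ENNReal.ofReal (b ^ (α + β - 2)) * ENNReal.ofReal (x ^ (α - 1) * (1 - x) ^ (β - 1)) := by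
    intro x hx
    rw [← ENNReal.ofReal_mul (by positivity), add_zero, ← mul_one_sub, Real.mul_rpow hb.le hx.1.le,
      Real.mul_rpow hb.le (sub_nonneg.2 hx.2.le), show α + β - 2 = α - 1 + (β - 1) by ring,
      Real.rpow_add hb]
    ring_nf
  have haffine := lintegral_Ioo_affine hb 0 1 fun x =>
    ENNReal.ofReal (x ^ (α - 1) * (b - x) ^ (β - 1))
  rw [mul_one, add_zero] at haffine
  rw [haffine, setLIntegral_congr_fun measurableSet_Ioo hscale,
    lintegral_const_mul' _ _ ENNReal.ofReal_ne_top, lintegral_rpow_mul_one_sub_rpow hα hβ,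
    ← ENNReal.ofReal_mul (by positivity), ← ENNReal.ofReal_mul hb.le, ← mul_assoc,
    show α + β - 1 = 1 + (α + β - 2) by ring, Real.rpow_add hb, Real.rpow_one]

lemma lintegral_rpow_mul_sub_rpow_mul_tsum {α β b : ℝ} (hα : 0 < α) (hβ : 0 < β) (hb : 0 < b)
    (c : ℕ → ℝ≥0∞) :
    ∫⁻ x in Ioo 0 b, ENNReal.ofReal (x ^ (α - 1) * (b - x) ^ (β - 1)) *
        ∑' k, c k * ENNReal.ofReal x ^ k =
      ENNReal.ofReal (b ^ (α + β - 1) * beta α β) *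
        ∑' k, c k * ENNReal.ofReal (poch α k / poch (α + β) k) * ENNReal.ofReal b ^ k := by
  have hmonomial (k : ℕ) :
      ∫⁻ x in Ioo 0 b, ENNReal.ofReal (x ^ (α - 1) * (b - x) ^ (β - 1)) *
          (c k * ENNReal.ofReal x ^ k) =
        c k * ENNReal.ofReal (b ^ (α + k + β - 1) * beta (α + k) β) := by
    rw [← lintegral_rpow_mul_sub_rpow (by positivity) hβ hb,
      ← lintegral_const_mul _ (by fun_prop)]
    refine setLIntegral_congr_fun measurableSet_Ioo fun x hx => ?_
    rw [mul_left_comm, ← ENNReal.ofReal_pow hx.1.le, mul_comm (ENNReal.ofReal _),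
      ← ENNReal.ofReal_mul (pow_nonneg hx.1.le k), ← mul_assoc, mul_comm (x ^ k),
      add_sub_right_comm, Real.rpow_add_natCast hx.1.ne']
  have hbeta := beta_pos hα hβ
  simp_rw [← ENNReal.tsum_mul_left]
  rw [lintegral_tsum fun k => by fun_prop]
  refine tsum_congr fun k => ?_
  rw [hmonomial, beta_add_natCast hα hβ, show α + k + β - 1 = α + β - 1 + k by ring,
    Real.rpow_add_natCast hb.ne', ← ENNReal.ofReal_pow hb.le, mul_assoc (c k),
    mul_left_comm (ENNReal.ofReal (b ^ (α + β - 1) * beta α β)),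
    ← ENNReal.ofReal_mul (div_nonneg (poch_pos hα k).le (poch_pos (add_pos hα hβ) k).le),
    ← ENNReal.ofReal_mul (by positivity)]
  ring_nf

end EulerIntegrals

section ChordIntegrals

/-- The factor `b^(-d) (1 - b)^(-d)` of the integrand carried by the middle variable once the
innermost variable has been scaled out. -/
noncomputable def sideWeight (d b : ℝ) : ℝ≥0∞ :=
  ENNReal.ofReal (b ^ (-d) * (1 - b) ^ (-d))

/-- The factor `a^(-d) (1 - c)^(-d) (a - c)^(-d)` of the integrand coupling the largest and the
smallest variable once the innermost variable has been scaled out. -/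
noncomputable def chordWeight (d a c : ℝ) : ℝ≥0∞ :=
  ENNReal.ofReal (a ^ (-d) * (1 - c) ^ (-d) * (a - c) ^ (-d))

variable (d : ℝ)

lemma measurable_sideWeight : Measurable (sideWeight d) := by
  unfold sideWeight
  fun_prop

lemma measurable_chordWeight : Measurable (Function.uncurry (chordWeight d)) := by
  unfold chordWeight
  fun_prop

lemma sideWeight_one_sub (b : ℝ) : sideWeight d (1 - b) = sideWeight d b := by
  rw [sideWeight, sideWeight, sub_sub_cancel, mul_comm]

lemma chordWeight_one_sub (a c : ℝ) : chordWeight d (1 - c) (1 - a) = chordWeight d a c := by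
  rw [chordWeight, chordWeight, sub_sub_cancel, sub_sub_sub_cancel_left, mul_comm (a ^ (-d))]

variable {d}

lemma lintegral_sideWeight (hd : d < 1) :
    ∫⁻ b in Ioo 0 1, sideWeight d b = ENNReal.ofReal (beta (1 - d) (1 - d)) := by
  rw [← lintegral_rpow_mul_one_sub_rpow (sub_pos.2 hd) (sub_pos.2 hd)]
  simp only [sideWeight, sub_sub_cancel_left]

lemma chordWeight_le (hd : 0 ≤ d) {a c : ℝ} (hc : 0 < c) (hca : c < a) (ha : a < 1) :
    chordWeight d a c ≤
      ENNReal.ofReal ((1 - a) ^ (-d)) * ENNReal.ofReal (c ^ (-d) * (a - c) ^ (-d)) := by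
  have ha0 : 0 < a := hc.trans hca
  have hac : a ^ (-d) ≤ c ^ (-d) :=
    Real.rpow_le_rpow_of_nonpos hc hca.le (neg_nonpos.2 hd)
  have hac' : (1 - c) ^ (-d) ≤ (1 - a) ^ (-d) :=
    Real.rpow_le_rpow_of_nonpos (sub_pos.2 ha) (by linarith) (neg_nonpos.2 hd)
  have : 0 < 1 - a := sub_pos.2 ha
  have : 0 < 1 - c := sub_pos.2 (hca.trans ha)
  have : 0 < a - c := sub_pos.2 hca
  rw [chordWeight, ← ENNReal.ofReal_mul (by positivity), ← mul_assoc, mul_comm (a ^ (-d))]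
  gcongr

lemma triangleLIntegral_chordWeight_one_ne_top (hd0 : 0 ≤ d) (hd1 : d < 1) :
    triangleLIntegral (chordWeight d) 1 ≠ ∞ := by
  have h1d : 0 < 1 - d := sub_pos.2 hd1
  have hinner : ∀ a ∈ Ioo (0 : ℝ) 1, ∫⁻ c in Ioo 0 a, chordWeight d a c ≤
      ENNReal.ofReal (a ^ (2 - 2 * d - 1) * (1 - a) ^ (1 - d - 1)) *
        ENNReal.ofReal (beta (1 - d) (1 - d)) := by
    intro a ha
    have hEuler := lintegral_rpow_mul_sub_rpow h1d h1d ha.1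
    rw [sub_sub_cancel_left, show 1 - d + (1 - d) - 1 = 2 - 2 * d - 1 by ring,
      ENNReal.ofReal_mul (Real.rpow_nonneg ha.1.le _)] at hEuler
    calc ∫⁻ c in Ioo 0 a, chordWeight d a c
        ≤ ∫⁻ c in Ioo 0 a,
            ENNReal.ofReal ((1 - a) ^ (-d)) * ENNReal.ofReal (c ^ (-d) * (a - c) ^ (-d)) :=
          setLIntegral_mono (by fun_prop) fun c hc => chordWeight_le hd0 hc.1 hc.2 ha.2
      _ = ENNReal.ofReal (a ^ (2 - 2 * d - 1) * (1 - a) ^ (1 - d - 1)) *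
            ENNReal.ofReal (beta (1 - d) (1 - d)) := by
          rw [lintegral_const_mul' _ _ ENNReal.ofReal_ne_top, hEuler, sub_sub_cancel_left,
            ENNReal.ofReal_mul (Real.rpow_nonneg ha.1.le _), ← mul_assoc,
            mul_comm (ENNReal.ofReal ((1 - a) ^ (-d)))]
  refine ne_top_of_le_ne_top ?_ (setLIntegral_mono (by fun_prop) hinner)
  rw [lintegral_mul_const' _ _ ENNReal.ofReal_ne_top,
    lintegral_rpow_mul_one_sub_rpow (by linarith) h1d]
  exact ENNReal.mul_ne_top ENNReal.ofReal_ne_top ENNReal.ofReal_ne_top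

lemma lintegral_chordWeight (hd0 : 0 ≤ d) (hd1 : d < 1) {a : ℝ} (ha : a ∈ Ioo 0 1) :
    ∫⁻ c in Ioo 0 a, chordWeight d a c =
      ENNReal.ofReal (a ^ (1 - 2 * d) / (1 - d)) *
        ∑' k : ℕ, ENNReal.ofReal (poch d k / k.factorial) *
          ENNReal.ofReal (poch 1 k / poch (2 - d) k) * ENNReal.ofReal a ^ k := by
  have h1d : 0 < 1 - d := sub_pos.2 hd1
  have hseries : ∀ c ∈ Ioo 0 a, chordWeight d a c = ENNReal.ofReal (a ^ (-d)) *
      (ENNReal.ofReal (c ^ ((1 : ℝ) - 1) * (a - c) ^ (1 - d - 1)) *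
        ∑' k : ℕ, ENNReal.ofReal (poch d k / k.factorial) * ENNReal.ofReal c ^ k) := by
    intro c hc
    rw [← ofReal_one_sub_rpow_neg hd0 hc.1.le (hc.2.trans ha.2), sub_self, Real.rpow_zero, one_mul,
      sub_sub_cancel_left, ← ENNReal.ofReal_mul (Real.rpow_nonneg (sub_nonneg.2 hc.2.le) _),
      ← ENNReal.ofReal_mul (Real.rpow_nonneg ha.1.le _), chordWeight, mul_assoc,
      mul_comm ((1 - c) ^ (-d))]
  rw [setLIntegral_congr_fun measurableSet_Ioo hseries,
    lintegral_const_mul' _ _ ENNReal.ofReal_ne_top,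
    lintegral_rpow_mul_sub_rpow_mul_tsum one_pos h1d ha.1, beta_one_left h1d, ← mul_assoc,
    ← ENNReal.ofReal_mul (Real.rpow_nonneg ha.1.le _), ← mul_assoc, ← Real.rpow_add ha.1,
    mul_one_div, show -d + (1 + (1 - d) - 1) = 1 - 2 * d by ring,
    show 1 + (1 - d) = 2 - d by ring]

/-- Coefficient of `z^k` in `₃F₂(1, d, 2-2d; 2-d, 3-2d; z)`. -/
noncomputable def triangleCoeff (d : ℝ) (k : ℕ) : ℝ :=
  poch 1 k * poch d k * poch (2 - 2 * d) k / (poch (2 - d) k * poch (3 - 2 * d) k) / k.factorial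

lemma triangleCoeff_nonneg (hd0 : 0 ≤ d) (hd1 : d < 1) (k : ℕ) : 0 ≤ triangleCoeff d k := by
  have h₁ := poch_pos one_pos k
  have h₂ := poch_nonneg hd0 k
  have h₃ := poch_pos (show 0 < 2 - 2 * d by linarith) k
  have h₄ := poch_pos (show 0 < 2 - d by linarith) k
  have h₅ := poch_pos (show 0 < 3 - 2 * d by linarith) k
  unfold triangleCoeff
  positivity

lemma ofReal_triangleCoeff (hd0 : 0 ≤ d) (hd1 : d < 1) (k : ℕ) :
    ENNReal.ofReal (triangleCoeff d k) =
      ENNReal.ofReal (poch d k / k.factorial) * ENNReal.ofReal (poch 1 k / poch (2 - d) k) *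
        ENNReal.ofReal (poch (2 - 2 * d) k / poch (3 - 2 * d) k) := by
  have h₁ := poch_pos one_pos k
  have h₂ := poch_nonneg hd0 k
  have h₃ := poch_pos (show 0 < 2 - d by linarith) k
  rw [← ENNReal.ofReal_mul (by positivity), ← ENNReal.ofReal_mul (by positivity), triangleCoeff]
  ring_nf

lemma triangleLIntegral_chordWeight (hd0 : 0 ≤ d) (hd1 : d < 1) {b : ℝ} (hb0 : 0 < b)
    (hb1 : b ≤ 1) :
    triangleLIntegral (chordWeight d) b =
      ENNReal.ofReal (b ^ (2 - 2 * d) / (2 * (1 - d) ^ 2)) *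
        ∑' k : ℕ, ENNReal.ofReal (triangleCoeff d k) * ENNReal.ofReal b ^ k := by
  have h1d : 0 < 1 - d := sub_pos.2 hd1
  have h2d : 0 < 2 - 2 * d := by linarith
  have hinner : ∀ a ∈ Ioo 0 b, ∫⁻ c in Ioo 0 a, chordWeight d a c = ENNReal.ofReal (1 / (1 - d)) *
      (ENNReal.ofReal (a ^ (2 - 2 * d - 1) * (b - a) ^ ((1 : ℝ) - 1)) *
        ∑' k : ℕ, ENNReal.ofReal (poch d k / k.factorial) *
          ENNReal.ofReal (poch 1 k / poch (2 - d) k) * ENNReal.ofReal a ^ k) := by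
    intro a ha
    rw [lintegral_chordWeight hd0 hd1 ⟨ha.1, ha.2.trans_le hb1⟩, ← mul_assoc,
      ← ENNReal.ofReal_mul (by positivity), sub_self, Real.rpow_zero, mul_one, one_div_mul_eq_div,
      show 2 - 2 * d - 1 = 1 - 2 * d by ring]
  rw [triangleLIntegral, setLIntegral_congr_fun measurableSet_Ioo hinner,
    lintegral_const_mul' _ _ ENNReal.ofReal_ne_top,
    lintegral_rpow_mul_sub_rpow_mul_tsum h2d one_pos hb0, beta_one_right h2d, ← mul_assoc,
    ← ENNReal.ofReal_mul (by positivity), add_sub_cancel_right,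
    show 2 - 2 * d + 1 = 3 - 2 * d by ring]
  simp_rw [ofReal_triangleCoeff hd0 hd1]
  congr 2
  field_simp

lemma lintegral_sideWeight_mul_triangleLIntegral (hd0 : 0 ≤ d) (hd1 : d < 1) :
    ∫⁻ b in Ioo 0 1, sideWeight d b * triangleLIntegral (chordWeight d) b =
      ENNReal.ofReal (beta (3 - 3 * d) (1 - d) / (2 * (1 - d) ^ 2)) *
        ∑' k : ℕ, ENNReal.ofReal
          (triangleCoeff d k * (poch (3 - 3 * d) k / poch (4 - 4 * d) k)) := by
  have h1d : 0 < 1 - d := sub_pos.2 hd1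
  have hseries : ∀ b ∈ Ioo (0 : ℝ) 1, sideWeight d b * triangleLIntegral (chordWeight d) b =
      ENNReal.ofReal (1 / (2 * (1 - d) ^ 2)) *
        (ENNReal.ofReal (b ^ (3 - 3 * d - 1) * (1 - b) ^ (1 - d - 1)) *
          ∑' k : ℕ, ENNReal.ofReal (triangleCoeff d k) * ENNReal.ofReal b ^ k) := by
    intro b hb
    have h1b : 0 < 1 - b := sub_pos.2 hb.2
    have hb0 := hb.1
    rw [triangleLIntegral_chordWeight hd0 hd1 hb.1 hb.2.le, ← mul_assoc, ← mul_assoc, sideWeight,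
      ← ENNReal.ofReal_mul (by positivity), ← ENNReal.ofReal_mul (by positivity),
      show 3 - 3 * d - 1 = -d + (2 - 2 * d) by ring, Real.rpow_add hb0, sub_sub_cancel_left]
    congr 2
    ring
  rw [setLIntegral_congr_fun measurableSet_Ioo hseries,
    lintegral_const_mul' _ _ ENNReal.ofReal_ne_top,
    lintegral_rpow_mul_sub_rpow_mul_tsum (by linarith) h1d one_pos, ← mul_assoc,
    ← ENNReal.ofReal_mul (by positivity), Real.one_rpow, one_mul, one_div_mul_eq_div,
    show 3 - 3 * d + (1 - d) = 4 - 4 * d by ring]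
  simp_rw [ENNReal.ofReal_one, one_pow, mul_one,
    ENNReal.ofReal_mul (triangleCoeff_nonneg hd0 hd1 _)]

lemma toReal_triangleLIntegral_one (hd0 : 0 ≤ d) (hd1 : d < 1) :
    (triangleLIntegral (chordWeight d) 1).toReal =
      1 / (2 * (1 - d) ^ 2) * hyp3F2 1 d (2 - 2 * d) (2 - d) (3 - 2 * d) 1 := by
  simp_rw [triangleLIntegral_chordWeight hd0 hd1 one_pos le_rfl, ENNReal.ofReal_one, one_pow,
    mul_one]
  rw [ENNReal.toReal_mul, toReal_tsum_ofReal (triangleCoeff_nonneg hd0 hd1), Real.one_rpow,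
    ENNReal.toReal_ofReal (by positivity), hyp3F2]
  simp_rw [triangleCoeff, one_pow, mul_one]

lemma toReal_lintegral_sideWeight_mul_triangleLIntegral (hd0 : 0 ≤ d) (hd1 : d < 1) :
    (∫⁻ b in Ioo 0 1, sideWeight d b * triangleLIntegral (chordWeight d) b).toReal =
      beta (3 - 3 * d) (1 - d) / (2 * (1 - d) ^ 2) *
        hyp4F3 1 d (2 - 2 * d) (3 - 3 * d) (2 - d) (3 - 2 * d) (4 - 4 * d) 1 := by
  have hbeta := beta_pos (show 0 < 3 - 3 * d by linarith) (sub_pos.2 hd1)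
  have hnonneg (k : ℕ) : 0 ≤ triangleCoeff d k * (poch (3 - 3 * d) k / poch (4 - 4 * d) k) :=
    mul_nonneg (triangleCoeff_nonneg hd0 hd1 k)
      (div_nonneg (poch_pos (by linarith) k).le (poch_pos (by linarith) k).le)
  rw [lintegral_sideWeight_mul_triangleLIntegral hd0 hd1, ENNReal.toReal_mul,
    toReal_tsum_ofReal hnonneg, ENNReal.toReal_ofReal (by positivity), hyp4F3]
  congr 1
  refine tsum_congr fun k => ?_
  rw [triangleCoeff, one_pow, mul_one]
  ring

lemma lintegral_sideWeight_mul_rectangleLIntegral_add (d : ℝ) :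
    (∫⁻ b in Ioo 0 1, sideWeight d b * rectangleLIntegral (chordWeight d) b) +
        2 * ∫⁻ b in Ioo 0 1, sideWeight d b * triangleLIntegral (chordWeight d) b =
      (∫⁻ b in Ioo 0 1, sideWeight d b) * triangleLIntegral (chordWeight d) 1 :=
  lintegral_mul_rectangleLIntegral_add (measurable_sideWeight d) (measurable_chordWeight d)
    (sideWeight_one_sub d) (chordWeight_one_sub d)

lemma lintegral_sideWeight_mul_triangleLIntegral_one_ne_top (hd0 : 0 ≤ d) (hd1 : d < 1) :
    (∫⁻ b in Ioo 0 1, sideWeight d b) * triangleLIntegral (chordWeight d) 1 ≠ ∞ := by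
  rw [lintegral_sideWeight hd1]
  exact ENNReal.mul_ne_top ENNReal.ofReal_ne_top (triangleLIntegral_chordWeight_one_ne_top hd0 hd1)

lemma lintegral_sideWeight_mul_rectangleLIntegral_ne_top (hd0 : 0 ≤ d) (hd1 : d < 1) :
    ∫⁻ b in Ioo 0 1, sideWeight d b * rectangleLIntegral (chordWeight d) b ≠ ∞ :=
  ne_top_of_le_ne_top (lintegral_sideWeight_mul_triangleLIntegral_one_ne_top hd0 hd1)
    (le_self_add.trans_eq (lintegral_sideWeight_mul_rectangleLIntegral_add d))

lemma toReal_lintegral_sideWeight_mul_rectangleLIntegral (hd0 : 0 ≤ d) (hd1 : d < 1) :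
    (∫⁻ b in Ioo 0 1, sideWeight d b * rectangleLIntegral (chordWeight d) b).toReal =
      beta (1 - d) (1 - d) / (2 * (1 - d) ^ 2) *
          hyp3F2 1 d (2 - 2 * d) (2 - d) (3 - 2 * d) 1 -
        beta (3 - 3 * d) (1 - d) / (1 - d) ^ 2 *
          hyp4F3 1 d (2 - 2 * d) (3 - 3 * d) (2 - d) (3 - 2 * d) (4 - 4 * d) 1 := by
  have hsum := lintegral_sideWeight_mul_rectangleLIntegral_add d
  have htri := ne_top_of_le_ne_top (lintegral_sideWeight_mul_triangleLIntegral_one_ne_top hd0 hd1)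
    (le_add_self.trans_eq hsum)
  replace hsum := congrArg ENNReal.toReal hsum
  rw [ENNReal.toReal_add (lintegral_sideWeight_mul_rectangleLIntegral_ne_top hd0 hd1) htri,
    ENNReal.toReal_mul, ENNReal.toReal_mul, lintegral_sideWeight hd1,
    ENNReal.toReal_ofReal (beta_pos (sub_pos.2 hd1) (sub_pos.2 hd1)).le,
    toReal_triangleLIntegral_one hd0 hd1,
    toReal_lintegral_sideWeight_mul_triangleLIntegral hd0 hd1, ENNReal.toReal_ofNat] at hsum
  rw [eq_sub_of_add_eq hsum]
  have h1d : 1 - d ≠ 0 := (sub_pos.2 hd1).ne'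
  field_simp

end ChordIntegrals

section QuadrupleIntegral

/-- Integrand of the quadruple integral at the point `(y₂, y₃, y₄, y₅)`, as an extended nonnegative
real so that the order of integration can be changed freely. -/
noncomputable def simplexIntegrand (d : ℝ) (y : ℝ × ℝ × ℝ × ℝ) : ℝ≥0∞ :=
  match y with
  | (y₂, y₃, y₄, y₅) => ENNReal.ofReal ((1 - y₃) ^ (-d) *
      ((y₂ - y₄) ^ (-d) * (1 - y₄) ^ (-d) * ((y₂ - y₅) ^ (-d) * (y₃ - y₅) ^ (-d))))

variable {d : ℝ}

lemma measurable_simplexIntegrand (d : ℝ) : Measurable (simplexIntegrand d) := by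
  unfold simplexIntegrand
  fun_prop

lemma simplexIntegrand_affine {y : ℝ} (hy : y < 1) {a b c : ℝ} (hc : 0 < c) (hcb : c < b)
    (hba : b < a) (ha : a < 1) :
    simplexIntegrand d ((1 - y) * a + y, (1 - y) * b + y, (1 - y) * c + y, y) =
      ENNReal.ofReal ((1 - y) ^ (-5 * d)) * (sideWeight d b * chordWeight d a c) := by
  have hk : 0 < 1 - y := sub_pos.2 hy
  have hb : 0 < b := hc.trans hcb
  have h1b : 0 < 1 - b := sub_pos.2 (hba.trans ha)
  have h1c : 0 < 1 - c := sub_pos.2 ((hcb.trans hba).trans ha)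
  have hac : 0 < a - c := sub_pos.2 (hcb.trans hba)
  have hpow : (1 - y) ^ (-5 * d) = ((1 - y) ^ (-d)) ^ 5 := by
    rw [← Real.rpow_mul_natCast hk.le]
    congr 1
    push_cast
    ring
  rw [simplexIntegrand, sideWeight, chordWeight, ← ENNReal.ofReal_mul (by positivity),
    ← ENNReal.ofReal_mul (by positivity), hpow, add_sub_cancel_right, add_sub_cancel_right,
    show 1 - ((1 - y) * b + y) = (1 - y) * (1 - b) by ring,
    show 1 - ((1 - y) * c + y) = (1 - y) * (1 - c) by ring,
    show (1 - y) * a + y - ((1 - y) * c + y) = (1 - y) * (a - c) by ring,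
    Real.mul_rpow hk.le h1b.le, Real.mul_rpow hk.le h1c.le, Real.mul_rpow hk.le hac.le,
    Real.mul_rpow hk.le (hb.trans hba).le, Real.mul_rpow hk.le hb.le]
  ring_nf

lemma lintegral_simplexIntegrand_base {y : ℝ} (hy : y < 1) :
    ∫⁻ y₂ in Ioo y 1, ∫⁻ y₃ in Ioo y y₂, ∫⁻ y₄ in Ioo y y₃, simplexIntegrand d (y₂, y₃, y₄, y) =
      ENNReal.ofReal ((1 - y) ^ (4 - 5 * d - 1)) *
        ∫⁻ b in Ioo 0 1, sideWeight d b * rectangleLIntegral (chordWeight d) b := by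
  have hk : 0 < 1 - y := sub_pos.2 hy
  have hscale : ∀ a ∈ Ioo (0 : ℝ) 1, ∫⁻ b in Ioo 0 a, ∫⁻ c in Ioo 0 b,
        simplexIntegrand d ((1 - y) * a + y, (1 - y) * b + y, (1 - y) * c + y, y) =
      ENNReal.ofReal ((1 - y) ^ (-5 * d)) *
        ∫⁻ b in Ioo 0 a, ∫⁻ c in Ioo 0 b, sideWeight d b * chordWeight d a c := by
    intro a ha
    simp_rw [← lintegral_const_mul' _ _ ENNReal.ofReal_ne_top]
    exact setLIntegral_congr_fun measurableSet_Ioo fun b hb =>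
      setLIntegral_congr_fun measurableSet_Ioo fun c hc =>
        simplexIntegrand_affine hy hc.1 hc.2 hb.2 ha.2
  have haffine := lintegral_simplex_affine hk y fun y₂ y₃ y₄ => simplexIntegrand d (y₂, y₃, y₄, y)
  rw [sub_add_cancel] at haffine
  rw [haffine, setLIntegral_congr_fun measurableSet_Ioo hscale,
    lintegral_const_mul' _ _ ENNReal.ofReal_ne_top, ← mul_assoc,
    ← ENNReal.ofReal_mul (by positivity), ← Real.rpow_natCast, ← Real.rpow_add hk,
    lintegral_mul_rectangleLIntegral (measurable_sideWeight d) (measurable_chordWeight d)]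
  congr 3
  push_cast
  ring

lemma lintegral_simplexIntegrand (hd : d < 4 / 5) :
    ∫⁻ y₂ in Ioo 0 1, ∫⁻ y₃ in Ioo 0 y₂, ∫⁻ y₄ in Ioo 0 y₃, ∫⁻ y₅ in Ioo 0 y₄,
        simplexIntegrand d (y₂, y₃, y₄, y₅) =
      ENNReal.ofReal (beta 1 (4 - 5 * d)) *
        ∫⁻ b in Ioo 0 1, sideWeight d b * rectangleLIntegral (chordWeight d) b := by
  rw [lintegral_simplex_innermost_to_outermost (measurable_simplexIntegrand d),
    setLIntegral_congr_fun measurableSet_Ioo fun y hy => lintegral_simplexIntegrand_base hy.2,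
    lintegral_mul_const _ (by fun_prop),
    ← lintegral_rpow_mul_one_sub_rpow one_pos (by linarith)]
  simp_rw [sub_self, Real.rpow_zero, one_mul]

lemma intervalIntegral_simplex_eq_toReal_lintegral_simplexIntegrand
    (hfin : ∫⁻ y₂ in Ioo 0 1, ∫⁻ y₃ in Ioo 0 y₂, ∫⁻ y₄ in Ioo 0 y₃, ∫⁻ y₅ in Ioo 0 y₄,
        simplexIntegrand d (y₂, y₃, y₄, y₅) ≠ ∞) :
    (∫ y₂ in (0:ℝ)..1, ∫ y₃ in (0:ℝ)..y₂, (1 - y₃) ^ (-d) *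
      ∫ y₄ in (0:ℝ)..y₃, (y₂ - y₄) ^ (-d) * (1 - y₄) ^ (-d) *
        ∫ y₅ in (0:ℝ)..y₄, (y₂ - y₅) ^ (-d) * (y₃ - y₅) ^ (-d)) =
      (∫⁻ y₂ in Ioo 0 1, ∫⁻ y₃ in Ioo 0 y₂, ∫⁻ y₄ in Ioo 0 y₃, ∫⁻ y₅ in Ioo 0 y₄,
        simplexIntegrand d (y₂, y₃, y₄, y₅)).toReal := by
  simp_rw [← intervalIntegral.integral_const_mul]
  refine intervalIntegral_simplex_eq_toReal_lintegral (measurable_simplexIntegrand d) zero_le_one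
    hfin fun y₂ y₃ y₄ y₅ h₂ h₃ h₄ h₅ => (ENNReal.toReal_ofReal ?_).symm
  have h1y₃ : 0 ≤ 1 - y₃ := by linarith [h₂.2, h₃.2]
  have h1y₄ : 0 ≤ 1 - y₄ := by linarith [h₄.2]
  have hy₂y₄ : 0 ≤ y₂ - y₄ := by linarith [h₃.2, h₄.2]
  have hy₂y₅ : 0 ≤ y₂ - y₅ := by linarith [h₅.2]
  have hy₃y₅ : 0 ≤ y₃ - y₅ := by linarith [h₄.2, h₅.2]
  positivity

end QuadrupleIntegral

theorem quadruple_integral (d : ℝ) (hd0 : 0 ≤ d) (hd1 : d < 4 / 5) :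
    (∫ y₂ in (0:ℝ)..1, ∫ y₃ in (0:ℝ)..y₂, (1 - y₃) ^ (-d) *
      ∫ y₄ in (0:ℝ)..y₃, (y₂ - y₄) ^ (-d) * (1 - y₄) ^ (-d) *
        ∫ y₅ in (0:ℝ)..y₄, (y₂ - y₅) ^ (-d) * (y₃ - y₅) ^ (-d))
    = Real.Gamma (1 - d) * Real.Gamma (2 - d) * Real.Gamma (4 - 5 * d) /
        ((1 - d) ^ 2 * Real.Gamma (3 - 2 * d) * Real.Gamma (5 - 5 * d)) *
        hyp3F2 1 d (2 - 2 * d) (2 - d) (3 - 2 * d) 1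
      - Real.Gamma (1 - d) * Real.Gamma (3 - 3 * d) * Real.Gamma (4 - 5 * d) /
          ((1 - d) ^ 2 * Real.Gamma (4 - 4 * d) * Real.Gamma (5 - 5 * d)) *
          hyp4F3 1 d (2 - 2 * d) (3 - 3 * d) (2 - d) (3 - 2 * d) (4 - 4 * d) 1 := by
  have hd : d < 1 := by linarith
  have h1d : 0 < 1 - d := sub_pos.2 hd
  have hbeta : 0 < beta 1 (4 - 5 * d) := beta_pos one_pos (by linarith)
  have hreduce := lintegral_simplexIntegrand hd1
  have hfin := ENNReal.mul_ne_top (ENNReal.ofReal_ne_top (r := beta 1 (4 - 5 * d)))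
    (lintegral_sideWeight_mul_rectangleLIntegral_ne_top hd0 hd)
  rw [intervalIntegral_simplex_eq_toReal_lintegral_simplexIntegrand (hreduce ▸ hfin), hreduce,
    ENNReal.toReal_mul, ENNReal.toReal_ofReal hbeta.le,
    toReal_lintegral_sideWeight_mul_rectangleLIntegral hd0 hd, mul_sub, beta_self h1d, beta, beta,
    Real.Gamma_one, show 1 + (4 - 5 * d) = 5 - 5 * d by ring, show 1 - d + 1 = 2 - d by ring,
    show 2 * (1 - d) + 1 = 3 - 2 * d by ring, show 3 - 3 * d + (1 - d) = 4 - 4 * d by ring]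
  congr 1 <;> field_simp
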